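/- Let n ≥ 1 be an integer, a = (a_1,…,a_{p−1}) a vector of positive reals and b = (b_1,…,b_p) a vector of positive reals. Set a′ = (n/2, a_1,…,a_{p−1}) and suppose v_{a′,b}(t) ≥ 0 for all t ∈ (0,1]. Then the function r ↦ p−1Fp(a;b;−r²) on [0,∞) is n-RPD. -/

import Mathlib

/-!
Write `a' = (n/2, a)`. The series `p-1Fp(a;b;-‖x‖²)` arises from `0F1(;n/2;-‖x‖²)` by multiplying
the `k`-th coefficient by `μ k = ∏ (a'_j)_k / (b_j)_k`, and two facts combine.

* `0F1(;n/2;-‖x‖²)` is, up to a positive constant, the integral of `cos (2⟪x, σ⟫)` over the unit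
  sphere (`hasSum_sphere_cos`), hence positive definite on `ℝⁿ` (`besselTerm_posDef`). The even
  moments of the sphere (`sphere_moment`) come from writing a Gaussian moment in polar
  coordinates.
* `μ` is a Hausdorff moment sequence (`isMomentSeq_ratio`). By Frullani's formula
  `μ k = exp (-∫_0^∞ (1 - e^{-kt}) ρ(t) dt)` with `ρ(t) = v(e^{-t}) / (t (1 - e^{-t})) ≥ 0`, and
  moment sequences are stable under products, exponentials and pointwise limits.

If `μ k = s ^ k` with `s ∈ [0,1]`, the coefficientwise product is the dilation `0F1(;n/2;-s‖x‖²)`,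
still positive definite; a general moment sequence acts as a mixture of these
(`momentSeq_posDef`). No representing measure is needed: a moment sequence is encoded by duality,
as a sequence that is nonnegative against the coefficients of every polynomial that is
nonnegative on `[0,1]`.
-/

/-- Rising factorial (Pochhammer symbol) `(x)_k = x(x+1)⋯(x+k-1)` for real `x`. -/
noncomputable def risingFactorial (x : ℝ) (k : ℕ) : ℝ := ∏ i ∈ Finset.range k, (x + (i : ℝ))

/-- The generalized hypergeometric function `pFq(a;b;z)` with real parameters and real
argument, defined by its power series (which converges for every `z` when `p ≤ q`). -/
noncomputable def pFq {p q : ℕ} (a : Fin p → ℝ) (b : Fin q → ℝ) (z : ℝ) : ℝ :=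
  ∑' k : ℕ,
    (∏ i, risingFactorial (a i) k) /
      ((∏ j, risingFactorial (b j) k) * (k.factorial : ℝ)) * z ^ k


/-- A continuous function `f : [0,∞) → ℝ` (modelled as `f : ℝ → ℝ` continuous on
`[0,∞)`) is `n`-RPD (radial positive definite in dimension `n`, class `Φ_n`) if for all
`m`, all points `t_1,…,t_m ∈ ℝ^n` and all complex `ξ_1,…,ξ_m`, the Hermitian sum
`∑_{i,j} f(‖t_i - t_j‖) ξ_i conj(ξ_j)` is a nonnegative real number. -/
def IsRPD (n : ℕ) (f : ℝ → ℝ) : Prop :=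
  ContinuousOn f (Set.Ici 0) ∧
  ∀ (m : ℕ) (t : Fin m → EuclideanSpace ℝ (Fin n)) (ξ : Fin m → ℂ),
    ∃ c : ℝ, 0 ≤ c ∧
      (∑ i, ∑ j, (f ‖t i - t j‖ : ℂ) * ξ i * (starRingEnd ℂ) (ξ j)) = (c : ℂ)


open MeasureTheory Set Filter Topology

/-! ### Hausdorff moment sequences -/

/-- Hausdorff moment sequences of positive measures on `[0,1]`, in dual form: the linear
functional `x ^ k ↦ m k` is nonnegative on every polynomial `∑ k < N, c k x ^ k` that is
nonnegative on `[0,1]`. -/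
def IsMomentSeq (m : ℕ → ℝ) : Prop :=
  ∀ (N : ℕ) (c : ℕ → ℝ), (∀ x : ℝ, 0 ≤ x → x ≤ 1 → 0 ≤ ∑ k ∈ Finset.range N, c k * x ^ k) →
    0 ≤ ∑ k ∈ Finset.range N, c k * m k

namespace IsMomentSeq

lemma one : IsMomentSeq (fun _ => 1) := by
  intro N c h
  simpa using h 1 zero_le_one le_rfl

/-- The sequence of powers of a point `s ∈ [0,1]` (the moments of a Dirac mass). -/
lemma powers {s : ℝ} (hs0 : 0 ≤ s) (hs1 : s ≤ 1) : IsMomentSeq (fun k => s ^ k) :=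
  fun _ _ h => h s hs0 hs1

lemma add {m m' : ℕ → ℝ} (h : IsMomentSeq m) (h' : IsMomentSeq m') :
    IsMomentSeq (fun k => m k + m' k) := by
  intro N c hc
  simp only [mul_add, Finset.sum_add_distrib]
  exact add_nonneg (h N c hc) (h' N c hc)

lemma const_mul {m : ℕ → ℝ} (h : IsMomentSeq m) {r : ℝ} (hr : 0 ≤ r) :
    IsMomentSeq (fun k => r * m k) := by
  intro N c hc
  simp only [mul_left_comm _ r, ← Finset.mul_sum]
  exact mul_nonneg hr (h N c hc)

/-- Apply the functional of `m'` in `y` and then that of `m` in `x` to the polynomial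
`∑ c k (x y) ^ k`, which is nonnegative on `[0,1]²`. -/
lemma mul {m m' : ℕ → ℝ} (h : IsMomentSeq m) (h' : IsMomentSeq m') :
    IsMomentSeq (fun k => m k * m' k) := by
  intro N c hc
  have key := h N (fun k => c k * m' k) fun x hx0 hx1 => by
    have := h' N (fun k => c k * x ^ k) fun y hy0 hy1 => by
      simpa [mul_pow, mul_assoc] using
        hc (x * y) (mul_nonneg hx0 hy0) (mul_le_one₀ hx1 hy0 hy1)
    simpa [mul_right_comm] using this
  simpa [mul_assoc, mul_comm, mul_left_comm] using key

lemma pow {m : ℕ → ℝ} (h : IsMomentSeq m) (l : ℕ) : IsMomentSeq (fun k => m k ^ l) := by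
  induction l with
  | zero => simpa using one
  | succ l ih => simpa [pow_succ] using ih.mul h

lemma of_tendsto {m : ℕ → ℕ → ℝ} {m' : ℕ → ℝ} (h : ∀ l, IsMomentSeq (m l))
    (hlim : ∀ k, Tendsto (fun l => m l k) atTop (𝓝 (m' k))) : IsMomentSeq m' := by
  intro N c hc
  have : Tendsto (fun l => ∑ k ∈ Finset.range N, c k * m l k) atTop
      (𝓝 (∑ k ∈ Finset.range N, c k * m' k)) :=
    tendsto_finsetSum _ fun k _ => (hlim k).const_mul _
  exact ge_of_tendsto' this fun l => h l N c hc

lemma exp {m : ℕ → ℝ} (h : IsMomentSeq m) : IsMomentSeq (fun k => Real.exp (m k)) := by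
  refine of_tendsto (m := fun l k => ∑ i ∈ Finset.range l, m k ^ i / (i.factorial : ℝ)) ?_ ?_
  · intro l
    induction l with
    | zero => simpa using one.const_mul le_rfl
    | succ l ih =>
      simp only [Finset.sum_range_succ]
      refine ih.add ?_
      simpa [div_eq_inv_mul] using
        (h.pow l).const_mul (r := ((l.factorial : ℝ))⁻¹) (by positivity)
  · intro k
    have := NormedSpace.expSeries_div_hasSum_exp (m k)
    rw [← Real.exp_eq_exp_ℝ] at this
    exact this.tendsto_sum_nat

/-- The moments of the image of `ρ(t) dt` on `(ε, ∞)` under `t ↦ e^{-t}`. -/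
lemma integral {ρ : ℝ → ℝ} {ε : ℝ} (hε : 0 ≤ ε) (hρ : IntegrableOn ρ (Ioi ε))
    (hρ0 : ∀ t ∈ Ioi ε, 0 ≤ ρ t) :
    IsMomentSeq (fun k => ∫ t in Ioi ε, Real.exp (-(k * t)) * ρ t) := by
  intro N c hc
  have hint : ∀ k : ℕ, IntegrableOn (fun t => Real.exp (-(k * t)) * ρ t) (Ioi ε) := by
    intro k
    refine Integrable.bdd_mul (c := 1) hρ (by fun_prop) ?_
    filter_upwards [ae_restrict_mem measurableSet_Ioi] with t ht
    have : 0 < t := lt_of_le_of_lt hε ht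
    simp only [Real.norm_eq_abs, Real.abs_exp, Real.exp_le_one_iff, Left.neg_nonpos_iff]
    positivity
  simp only [← integral_const_mul]
  rw [← integral_finsetSum _ fun k _ => (hint k).const_mul _]
  refine setIntegral_nonneg measurableSet_Ioi fun t ht => ?_
  have ht0 : 0 < t := lt_of_le_of_lt hε ht
  have := hc (Real.exp (-t)) (Real.exp_pos _).le (by simpa using ht0.le)
  have e : ∑ k ∈ Finset.range N, c k * (Real.exp (-(k * t)) * ρ t)
      = (∑ k ∈ Finset.range N, c k * Real.exp (-t) ^ k) * ρ t := by
    rw [Finset.sum_mul]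
    refine Finset.sum_congr rfl fun k _ => ?_
    rw [← Real.exp_nat_mul]; ring_nf
  rw [e]
  exact mul_nonneg this (hρ0 t ht)

lemma nonneg {m : ℕ → ℝ} (h : IsMomentSeq m) (k : ℕ) : 0 ≤ m k := by
  have := h (k + 1) (fun i => if i = k then 1 else 0) (fun x hx _ => by simp; positivity)
  simpa using this

lemma le_zero {m : ℕ → ℝ} (h : IsMomentSeq m) (k : ℕ) : m k ≤ m 0 := by
  have := h (k + 1) (fun i => (if i = 0 then 1 else 0) - (if i = k then 1 else 0))
    (fun x hx hx1 => by simpa [sub_mul] using pow_le_one₀ hx hx1)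
  simpa [sub_mul] using this

/-- The defining property extends from polynomials to absolutely convergent power series: the
truncation at `N` becomes nonnegative on `[0,1]` once the tail `∑_{k ≥ N} |w k|` is added to its
constant term. -/
lemma tsum_nonneg {m : ℕ → ℝ} (h : IsMomentSeq m) {w : ℕ → ℝ} (hw : Summable fun k => |w k|)
    (hpos : ∀ x : ℝ, 0 ≤ x → x ≤ 1 → 0 ≤ ∑' k, w k * x ^ k) : 0 ≤ ∑' k, w k * m k := by
  have hs : Summable fun k => w k * m k := by
    refine Summable.of_norm_bounded (hw.mul_right (m 0)) fun k => ?_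
    rw [Real.norm_eq_abs, abs_mul, abs_of_nonneg (h.nonneg k)]
    exact mul_le_mul_of_nonneg_left (h.le_zero k) (abs_nonneg _)
  have htail := tendsto_sum_nat_add fun k => |w k|
  have hlim := (hs.hasSum.tendsto_sum_nat).add (htail.mul_const (m 0))
  rw [zero_mul, add_zero] at hlim
  refine ge_of_tendsto hlim ?_
  filter_upwards [eventually_ge_atTop 1] with N hN
  have hz : 0 ∈ Finset.range N := Finset.mem_range.2 hN
  set E := ∑' k, |w (k + N)| with hE
  have := h N (fun k => w k + if k = 0 then E else 0) fun x hx0 hx1 => by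
    have hsx : Summable fun k => w k * x ^ k := by
      refine Summable.of_norm_bounded hw fun k => ?_
      rw [Real.norm_eq_abs, abs_mul, abs_of_nonneg (pow_nonneg hx0 k)]
      exact mul_le_of_le_one_right (abs_nonneg _) (pow_le_one₀ hx0 hx1)
    have h1 := hsx.sum_add_tsum_nat_add N
    have h2 : ∑' k, w (k + N) * x ^ (k + N) ≤ E := by
      refine Summable.tsum_le_tsum (fun k => ?_) ((summable_nat_add_iff N).2 hsx)
        ((summable_nat_add_iff N).2 hw)
      refine (le_abs_self _).trans ?_
      rw [abs_mul, abs_of_nonneg (pow_nonneg hx0 _)]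
      exact mul_le_of_le_one_right (abs_nonneg _) (pow_le_one₀ hx0 hx1)
    have h3 := hpos x hx0 hx1
    simp only [add_mul, Finset.sum_add_distrib, ite_mul, zero_mul, Finset.sum_ite_eq', hz, if_true,
      pow_zero, mul_one]
    linarith
  simpa only [add_mul, Finset.sum_add_distrib, ite_mul, zero_mul, Finset.sum_ite_eq', hz, if_true]
    using this

end IsMomentSeq

/-! ### Ratios of rising factorials as moments -/

lemma integrableOn_frullani {x y : ℝ} (hx : 0 < x) (hy : 0 < y) :
    IntegrableOn (fun t => (Real.exp (-(x * t)) - Real.exp (-(y * t))) / t) (Ioi 0) := by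
  -- Dominating function: `|e^{-xt} - e^{-yt}| / t ≤ |y - x| e^{-min(x,y) t}`
  have hz : 0 < min x y := lt_min hx hy
  have hdom : IntegrableOn (fun t => |y - x| * Real.exp (-(min x y) * t)) (Ioi 0) :=
    (integrableOn_exp_mul_Ioi (by linarith) 0).const_mul _
  refine Integrable.mono' hdom ?_ ?_
  · refine Measurable.aestronglyMeasurable ?_
    fun_prop
  filter_upwards [ae_restrict_mem measurableSet_Ioi] with t ht
  have ht : 0 < t := ht
  have key : ∀ u v : ℝ, u ≤ v →
      |Real.exp (-(u * t)) - Real.exp (-(v * t))| ≤ (v - u) * t * Real.exp (-(u * t)) := by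
    intro u v huv
    have h1 : Real.exp (-(v * t)) = Real.exp (-(u * t)) * Real.exp (-((v - u) * t)) := by
      rw [← Real.exp_add]; ring_nf
    have h2 := Real.add_one_le_exp (-((v - u) * t))
    have h3 : Real.exp (-((v - u) * t)) ≤ 1 := by
      simp only [Real.exp_le_one_iff, Left.neg_nonpos_iff]
      exact mul_nonneg (by linarith) ht.le
    have h4 := Real.exp_pos (-(u * t))
    rw [h1, abs_of_nonneg (by nlinarith)]
    nlinarith
  rw [Real.norm_eq_abs, abs_div, abs_of_pos ht, div_le_iff₀ ht]
  rcases le_total x y with h | h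
  · rw [min_eq_left h, abs_of_nonneg (by linarith : 0 ≤ y - x)]
    have := key x y h
    rw [neg_mul]; linarith
  · rw [min_eq_right h, abs_of_nonpos (by linarith : y - x ≤ 0), abs_sub_comm]
    have := key y x h
    rw [neg_mul y t]; linarith

lemma integral_frullani {x y : ℝ} (hx : 0 < x) (hy : 0 < y) :
    ∫ t in Ioi (0 : ℝ), (Real.exp (-(x * t)) - Real.exp (-(y * t))) / t = Real.log (y / x) := by
  have hc : Continuous fun t : ℝ => Real.exp (-t) := by fun_prop
  have hi := integrableOn_frullani hx hy
  have := Frullani.integral_Ioi_eq (f := fun t => Real.exp (-t)) (L := 1) (R := 0)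
    (hc.locallyIntegrable.locallyIntegrableOn _) hx hy
    (by simpa using (hc.tendsto 0).mono_left nhdsWithin_le_nhds)
    Real.tendsto_exp_neg_atTop_nhds_zero
    (by simpa only [smul_eq_mul, div_eq_inv_mul] using hi)
  simpa [div_eq_inv_mul] using this

lemma risingFactorial_pos {x : ℝ} (hx : 0 < x) (k : ℕ) : 0 < risingFactorial x k :=
  Finset.prod_pos fun _ _ => by positivity

lemma half_nat_pos {n : ℕ} (hn : 1 ≤ n) : (0 : ℝ) < n / 2 := by
  have : (0 : ℝ) < n := by exact_mod_cast hn
  positivity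

/-- Taking logarithms and applying Frullani's formula to each factor,
`∏ (α_j)_k / (β_j)_k = exp (-∫_0^∞ (1 - e^{-kt}) ρ(t) dt)` with
`ρ(t) = v(e^{-t}) / (t (1 - e^{-t})) ≥ 0`. Cutting the integral off at `ε > 0` makes it a
multiple of the exponential of a moment sequence, and `ε → 0` is a pointwise limit. -/
lemma isMomentSeq_ratio {r : ℕ} {α β : Fin r → ℝ} (hα : ∀ j, 0 < α j) (hβ : ∀ j, 0 < β j)
    (hv : ∀ t : ℝ, 0 < t → t ≤ 1 → 0 ≤ ∑ j, (t ^ α j - t ^ β j)) :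
    IsMomentSeq fun k => (∏ j, risingFactorial (α j) k) / ∏ j, risingFactorial (β j) k := by
  -- `D i` is the density `v(e^{-t}) e^{-it} / t` of `-log` of the `i`-th factor of the ratio.
  set D : ℕ → ℝ → ℝ := fun i t =>
    ∑ j, (Real.exp (-((α j + i) * t)) - Real.exp (-((β j + i) * t))) / t with hD
  have hDint : ∀ i, IntegrableOn (D i) (Ioi 0) := fun i =>
    integrable_finsetSum _ fun j _ =>
      integrableOn_frullani (add_pos_of_pos_of_nonneg (hα j) i.cast_nonneg)
        (add_pos_of_pos_of_nonneg (hβ j) i.cast_nonneg)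
  have hDval : ∀ i, ∫ t in Ioi (0 : ℝ), D i t = ∑ j, Real.log ((β j + i) / (α j + i)) := by
    intro i
    rw [hD, integral_finsetSum _ fun j _ =>
      integrableOn_frullani (add_pos_of_pos_of_nonneg (hα j) i.cast_nonneg)
        (add_pos_of_pos_of_nonneg (hβ j) i.cast_nonneg)]
    exact Finset.sum_congr rfl fun j _ =>
      integral_frullani (add_pos_of_pos_of_nonneg (hα j) i.cast_nonneg)
        (add_pos_of_pos_of_nonneg (hβ j) i.cast_nonneg)
  have hDshift : ∀ i t, D i t = Real.exp (-t) ^ i * D 0 t := by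
    intro i t
    simp only [hD, Finset.mul_sum]
    refine Finset.sum_congr rfl fun j _ => ?_
    rw [← Real.exp_nat_mul, ← mul_div_assoc, mul_sub, ← Real.exp_add, ← Real.exp_add]
    push_cast
    ring_nf
  have hD0 : ∀ t, 0 < t → 0 ≤ D 0 t := by
    intro t ht
    have := hv (Real.exp (-t)) (Real.exp_pos _) (by simpa using ht.le)
    simp only [hD, ← Finset.sum_div, Nat.cast_zero, add_zero]
    refine div_nonneg ?_ ht.le
    refine this.trans_eq (Finset.sum_congr rfl fun j _ => ?_)
    rw [← Real.exp_mul, ← Real.exp_mul]; ring_nf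
  -- The Lévy density; its mass near `t = 0` may be infinite, hence the cut-off at `ε`.
  set ρ : ℝ → ℝ := fun t => (1 - Real.exp (-t))⁻¹ * D 0 t with hρ
  have hρint : ∀ ε : ℝ, 0 < ε → IntegrableOn ρ (Ioi ε) := by
    intro ε hε
    have he : Real.exp (-ε) < 1 := by simpa using hε
    refine Integrable.bdd_mul (c := (1 - Real.exp (-ε))⁻¹)
      ((hDint 0).mono_set (Ioi_subset_Ioi hε.le))
      (Measurable.aestronglyMeasurable (by fun_prop)) ?_
    filter_upwards [ae_restrict_mem measurableSet_Ioi] with t ht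
    have h1 : Real.exp (-t) ≤ Real.exp (-ε) := Real.exp_le_exp.2 (neg_le_neg (le_of_lt ht))
    rw [Real.norm_eq_abs, abs_of_nonneg (inv_nonneg.2 (by linarith))]
    exact inv_anti₀ (by linarith) (by linarith)
  have hmom : ∀ ε : ℝ, 0 < ε →
      IsMomentSeq fun k => Real.exp (-∑ i ∈ Finset.range k, ∫ t in Ioi ε, D i t) := by
    intro ε hε
    have h1 := (IsMomentSeq.integral hε.le (hρint ε hε) fun t ht => by
      have ht0 : 0 < t := hε.trans ht
      have : Real.exp (-t) < 1 := by simpa using ht0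
      exact mul_nonneg (inv_nonneg.2 (by linarith)) (hD0 t ht0)).exp.const_mul
        (Real.exp_pos (-∫ t in Ioi ε, ρ t)).le
    convert h1 using 2 with k
    have hk : IntegrableOn (fun t => Real.exp (-(k * t)) * ρ t) (Ioi ε) := by
      refine Integrable.bdd_mul (c := 1) (hρint ε hε) (by fun_prop) ?_
      filter_upwards [ae_restrict_mem measurableSet_Ioi] with t ht
      have : 0 < t := hε.trans ht
      simp only [Real.norm_eq_abs, Real.abs_exp, Real.exp_le_one_iff, Left.neg_nonpos_iff]
      positivity
    rw [← Real.exp_add, ← integral_finsetSum _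
      fun i _ => (hDint i).mono_set (Ioi_subset_Ioi hε.le)]
    congr 1
    rw [neg_add_eq_sub, neg_eq_iff_eq_neg, neg_sub, ← integral_sub (hρint ε hε) hk]
    refine setIntegral_congr_fun measurableSet_Ioi fun t ht => ?_
    have ht0 : 0 < t := hε.trans ht
    have hne : 1 - Real.exp (-t) ≠ 0 := by
      have : Real.exp (-t) < 1 := by simpa using ht0
      linarith
    have hg := mul_neg_geom_sum (Real.exp (-t)) k
    have hek : Real.exp (-(k * t)) = Real.exp (-t) ^ k := by
      rw [← Real.exp_nat_mul]; ring_nf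
    have hsum : ∑ i ∈ Finset.range k, D i t
        = (∑ i ∈ Finset.range k, Real.exp (-t) ^ i) * D 0 t := by
      rw [Finset.sum_mul]
      exact Finset.sum_congr rfl fun i _ => hDshift i t
    simp only [hsum, hρ, hek]
    field_simp
    rw [← hg]
    ring
  refine IsMomentSeq.of_tendsto (fun l : ℕ => hmom (1 / ((l : ℝ) + 1)) (by positivity)) ?_
  intro k
  have hlim : Tendsto (fun l : ℕ => ∑ i ∈ Finset.range k, ∫ t in Ioi (1 / ((l : ℝ) + 1)), D i t)
      atTop (𝓝 (∑ i ∈ Finset.range k, ∫ t in Ioi (0 : ℝ), D i t)) := by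
    refine tendsto_finsetSum _ fun i _ => ?_
    have := (aecover_Ioi_of_Ioi (μ := volume) (A := (0 : ℝ))
      tendsto_one_div_add_atTop_nhds_zero_nat).integral_tendsto_of_countably_generated (hDint i)
    refine this.congr fun l => ?_
    rw [Measure.restrict_restrict measurableSet_Ioi,
      inter_eq_left.2 (Ioi_subset_Ioi (by positivity))]
  have hexp := (Real.continuous_exp.tendsto _).comp hlim.neg
  refine hexp.mono_right (le_of_eq (congrArg 𝓝 (Eq.symm ?_)))
  simp only [hDval, risingFactorial]
  rw [Finset.sum_comm, ← Finset.sum_neg_distrib, Real.exp_sum, ← Finset.prod_div_distrib]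
  refine Finset.prod_congr rfl fun j _ => ?_
  rw [← Finset.sum_neg_distrib, Real.exp_sum, ← Finset.prod_div_distrib]
  refine Finset.prod_congr rfl fun i _ => ?_
  have h1 : 0 < α j + i := add_pos_of_pos_of_nonneg (hα j) i.cast_nonneg
  have h2 : 0 < β j + i := add_pos_of_pos_of_nonneg (hβ j) i.cast_nonneg
  rw [← Real.log_inv, Real.exp_log (by positivity), inv_div]

/-! ### Moments of the sphere -/

lemma Gamma_add_nat {x : ℝ} (hx : 0 < x) (k : ℕ) :
    Real.Gamma (x + k) = risingFactorial x k * Real.Gamma x := by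
  induction k with
  | zero => simp [risingFactorial]
  | succ k ih =>
    have : x + k ≠ 0 := by positivity
    rw [Nat.cast_succ, ← add_assoc, Real.Gamma_add_one this, ih, risingFactorial, risingFactorial,
      Finset.prod_range_succ]
    ring

/-- Euclidean space `ℝⁿ`. -/
abbrev Euc (n : ℕ) := EuclideanSpace ℝ (Fin n)

lemma integral_sq_pow_mul_exp (k : ℕ) :
    ∫ y : ℝ, Real.exp (-y ^ 2) * y ^ (2 * k) = Real.Gamma (1 / 2 + k) := by
  have h := integral_comp_abs (f := fun y : ℝ => Real.exp (-y ^ 2) * y ^ (2 * k))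
  simp only [sq_abs, pow_mul] at h
  simp only [pow_mul]
  rw [h]
  have h2 := integral_rpow_mul_exp_neg_rpow (p := 2) (q := 2 * k) two_pos
    (by have : (0 : ℝ) ≤ k := Nat.cast_nonneg k
        linarith)
  rw [show (1 / 2 + k : ℝ) = (2 * k + 1) / 2 by ring]
  have : ∫ x in Ioi (0 : ℝ), Real.exp (-x ^ 2) * (x ^ 2) ^ k
      = ∫ x in Ioi (0 : ℝ), x ^ (2 * k : ℝ) * Real.exp (-x ^ (2 : ℝ)) := by
    refine setIntegral_congr_fun measurableSet_Ioi fun x hx => ?_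
    have e : x ^ (2 * k : ℝ) = (x ^ 2) ^ k := by
      rw [← pow_mul, ← Real.rpow_natCast]; norm_num
    simp only [e, Real.rpow_two]
    ring
  rw [this, h2]; ring

/-- In an orthonormal basis containing `x / ‖x‖` the integral splits into one-dimensional ones;
the factor `P` of the remaining `n - 1` coordinates depends on neither `x` nor `k`. -/
lemma integral_gaussian_moment {n : ℕ} (hn : 1 ≤ n) : ∃ P : ℝ, ∀ (x : Euc n) (k : ℕ),
    ∫ z : Euc n, Real.exp (-‖z‖ ^ 2) * (inner ℝ x z) ^ (2 * k)
      = ‖x‖ ^ (2 * k) * (Real.Gamma (1 / 2 + k) * P) := by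
  set i₀ : Fin n := ⟨0, hn⟩ with hi₀
  refine ⟨∏ i ∈ Finset.univ.erase i₀, ∫ y : ℝ, Real.exp (-y ^ 2), fun x k => ?_⟩
  obtain ⟨b, hb⟩ : ∃ b : OrthonormalBasis (Fin n) ℝ (Euc n), x = ‖x‖ • b i₀ := by
    rcases eq_or_ne x 0 with rfl | hx
    · exact ⟨EuclideanSpace.basisFun _ _, by simp⟩
    · have ho : Orthonormal ℝ (({i₀} : Set (Fin n)).domRestrict fun _ => ‖x‖⁻¹ • x) := by
        refine ⟨fun _ => ?_, fun i j hij => (hij (Subsingleton.elim _ _)).elim⟩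
        simp [Set.domRestrict, norm_smul, hx]
      obtain ⟨b, hb⟩ := ho.exists_orthonormalBasis_extension_of_card_eq (by simp)
      refine ⟨b, ?_⟩
      rw [hb i₀ rfl, smul_smul, mul_inv_cancel₀ (norm_ne_zero_iff.2 hx), one_smul]
  have h1 : ∀ z : Euc n, Real.exp (-‖z‖ ^ 2) * (inner ℝ x z) ^ (2 * k)
      = ‖x‖ ^ (2 * k) * (fun w : Euc n => Real.exp (-‖w‖ ^ 2) * (w i₀) ^ (2 * k)) (b.repr z) := by
    intro z
    have : inner ℝ x z = ‖x‖ * b.repr z i₀ := by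
      conv_lhs => rw [hb, inner_smul_left, ← b.repr_apply_apply]
      rfl
    simp only [this, LinearIsometryEquiv.norm_map, mul_pow]
    ring
  simp_rw [h1]
  rw [integral_const_mul, b.measurePreserving_repr.integral_comp
      b.repr.toHomeomorph.measurableEmbedding
      (fun w : Euc n => Real.exp (-‖w‖ ^ 2) * (w i₀) ^ (2 * k)),
    ← (PiLp.volume_preserving_toLp (Fin n)).integral_comp
      (MeasurableEquiv.toLp 2 _).measurableEmbedding]
  congr 1
  have h2 : ∀ v : Fin n → ℝ, Real.exp (-‖WithLp.toLp 2 v‖ ^ 2) * (WithLp.toLp 2 v i₀) ^ (2 * k)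
      = ∏ i, (fun (i : Fin n) (y : ℝ) =>
        Real.exp (-y ^ 2) * if i = i₀ then y ^ (2 * k) else 1) i (v i) := by
    intro v
    simp only [Finset.prod_mul_distrib, ← Real.exp_sum]
    simp [EuclideanSpace.norm_sq_eq]
  simp_rw [h2]
  rw [integral_fintype_prod_volume_eq_prod (fun (i : Fin n) (y : ℝ) =>
      Real.exp (-y ^ 2) * if i = i₀ then y ^ (2 * k) else 1),
    ← Finset.mul_prod_erase _ _ (Finset.mem_univ i₀)]
  congr 1
  · simpa using integral_sq_pow_mul_exp k
  · refine Finset.prod_congr rfl fun i hi => ?_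
    simp [Finset.ne_of_mem_erase hi]

open Metric Measure Module in
lemma polar_gaussian_moment {n : ℕ} (hn : 1 ≤ n) (x : Euc n) (k : ℕ) :
    ∫ z : Euc n, Real.exp (-‖z‖ ^ 2) * (inner ℝ x z) ^ (2 * k)
      = (∫ σ : sphere (0 : Euc n) 1, (inner ℝ x (σ : Euc n)) ^ (2 * k)
          ∂(volume : Measure (Euc n)).toSphere) * (Real.Gamma (n / 2 + k) / 2) := by
  have : Nonempty (Fin n) := ⟨⟨0, hn⟩⟩
  have hdim : finrank ℝ (Euc n) = n := by simp
  calc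
    _ = ∫ z : ({(0)}ᶜ : Set (Euc n)), Real.exp (-‖z.1‖ ^ 2) * (inner ℝ x z.1) ^ (2 * k)
          ∂(volume.comap Subtype.val) := by
      rw [integral_subtype_comap (measurableSet_singleton _).compl
        fun z : Euc n => Real.exp (-‖z‖ ^ 2) * (inner ℝ x z) ^ (2 * k),
        restrict_compl_singleton]
    _ = ∫ q, (inner ℝ x (q.1 : Euc n)) ^ (2 * k)
          * (Real.exp (-(q.2 : ℝ) ^ 2) * (q.2 : ℝ) ^ (2 * k))
          ∂(volume : Measure (Euc n)).toSphere.prod (.volumeIoiPow (finrank ℝ (Euc n) - 1)) := by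
      rw [← (volume : Measure (Euc n)).measurePreserving_homeomorphUnitSphereProd.integral_comp
        (Homeomorph.measurableEmbedding _)]
      refine integral_congr_ae (.of_forall fun z => ?_)
      have hz : ‖z.1‖ ≠ 0 := norm_ne_zero_iff.2 z.2
      simp only [homeomorphUnitSphereProd_apply_fst_coe, homeomorphUnitSphereProd_apply_snd_coe,
        inner_smul_right, mul_pow, inv_pow]
      field_simp
    _ = _ := by
      rw [integral_prod_mul (fun σ : sphere (0 : Euc n) 1 => (inner ℝ x (σ : Euc n)) ^ (2 * k))
        (fun r : Ioi (0 : ℝ) => Real.exp (-(r : ℝ) ^ 2) * (r : ℝ) ^ (2 * k))]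
      congr 1
      simp only [Measure.volumeIoiPow, ENNReal.ofReal]
      rw [integral_withDensity_eq_integral_smul, integral_subtype_comap measurableSet_Ioi
        fun a : ℝ ↦ Real.toNNReal (a ^ (finrank ℝ (Euc n) - 1)) •
          (Real.exp (-a ^ 2) * a ^ (2 * k)), hdim]
      · have h2 := integral_rpow_mul_exp_neg_rpow (p := 2) (q := ((n - 1 + 2 * k : ℕ) : ℝ)) two_pos
          (by have : (0 : ℝ) ≤ ((n - 1 + 2 * k : ℕ) : ℝ) := Nat.cast_nonneg _
              linarith)
        have h3 : ((((n - 1 + 2 * k : ℕ) : ℝ)) + 1) / 2 = n / 2 + k := by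
          push_cast [Nat.cast_sub hn]; ring
        rw [h3] at h2
        rw [div_eq_inv_mul, ← one_div, ← h2]
        refine setIntegral_congr_fun measurableSet_Ioi fun r hr => ?_
        simp only [NNReal.smul_def, Real.coe_toNNReal _ (pow_nonneg (le_of_lt hr) _),
          Real.rpow_natCast, Real.rpow_two, smul_eq_mul, pow_add]
        ring
      · exact (measurable_subtype_coe.pow_const _).real_toNNReal

open Metric in
/-- Compare the Gaussian moment in Cartesian and in polar coordinates; the case of exponent `0`
identifies the normalizing constant. -/
lemma sphere_moment {n : ℕ} (hn : 1 ≤ n) (x : Euc n) (k : ℕ) :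
    ∫ σ : sphere (0 : Euc n) 1, (inner ℝ x (σ : Euc n)) ^ (2 * k)
          ∂(volume : Measure (Euc n)).toSphere
      = (volume : Measure (Euc n)).toSphere.real univ *
        (‖x‖ ^ (2 * k) * (risingFactorial (1 / 2) k / risingFactorial (n / 2) k)) := by
  obtain ⟨P, hP⟩ := integral_gaussian_moment hn
  have hn2 := half_nat_pos hn
  have h1 := (polar_gaussian_moment hn x k).symm.trans (hP x k)
  have h0 := (polar_gaussian_moment hn x 0).symm.trans (hP x 0)
  simp only [mul_zero, pow_zero, integral_const, smul_eq_mul, mul_one, Nat.cast_zero, add_zero,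
    one_mul] at h0
  rw [Gamma_add_nat hn2, Gamma_add_nat (by norm_num)] at h1
  have g1 := Real.Gamma_pos_of_pos hn2
  have g3 := risingFactorial_pos hn2 k
  set S := ∫ σ : sphere (0 : Euc n) 1, (inner ℝ x (σ : Euc n)) ^ (2 * k)
          ∂(volume : Measure (Euc n)).toSphere
  set C := (volume : Measure (Euc n)).toSphere.real univ
  set G := Real.Gamma (n / 2)
  field_simp
  have : S * risingFactorial (n / 2) k * (G / 2)
    = C * ‖x‖ ^ (2 * k) * risingFactorial (1 / 2) k * (G / 2) := by
    linear_combination h1 - ‖x‖ ^ (2 * k) * risingFactorial (1 / 2) k * h0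
  have := mul_right_cancel₀ (by positivity) this
  linarith

lemma four_pow_mul_risingFactorial (k : ℕ) :
    (4 : ℝ) ^ k * risingFactorial (1 / 2) k * k.factorial = ((2 * k).factorial : ℝ) := by
  induction k with
  | zero => simp [risingFactorial]
  | succ k ih =>
    have h : risingFactorial (1 / 2) (k + 1) = risingFactorial (1 / 2) k * (1 / 2 + k) :=
      Finset.prod_range_succ _ _
    rw [show 2 * (k + 1) = 2 * k + 1 + 1 by ring, Nat.factorial_succ (2 * k + 1),
      Nat.factorial_succ (2 * k), Nat.factorial_succ k, h, pow_succ]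
    push_cast
    rw [← ih]; ring

/-! ### Positive definiteness of `0F1(;n/2;-‖x‖²)` -/

/-- The `k`-th term of the series `0F1(;n/2;-‖x‖²)`. -/
noncomputable def besselTerm (n : ℕ) (x : Euc n) (k : ℕ) : ℝ :=
  (-(‖x‖ ^ 2)) ^ k / (risingFactorial (n / 2) k * k.factorial)

open Metric in
/-- Integrate the cosine series termwise, using `4 ^ k (1/2)_k k! = (2k)!`. -/
lemma hasSum_sphere_cos {n : ℕ} (hn : 1 ≤ n) (x : Euc n) :
    HasSum (fun k => (volume : Measure (Euc n)).toSphere.real univ * besselTerm n x k)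
      (∫ σ : sphere (0 : Euc n) 1, Real.cos (2 * inner ℝ x (σ : Euc n))
          ∂(volume : Measure (Euc n)).toSphere) := by
  have key : HasSum (fun k : ℕ => ∫ σ : sphere (0 : Euc n) 1,
      (-1 : ℝ) ^ k * (2 * inner ℝ x (σ : Euc n)) ^ (2 * k) / (2 * k).factorial
        ∂(volume : Measure (Euc n)).toSphere)
      (∫ σ : sphere (0 : Euc n) 1, Real.cos (2 * inner ℝ x (σ : Euc n))
          ∂(volume : Measure (Euc n)).toSphere) := by
    have hsum : Summable fun k : ℕ => (2 * ‖x‖) ^ (2 * k) / ((2 * k).factorial : ℝ) :=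
      (Real.summable_pow_div_factorial (2 * ‖x‖)).comp_injective
        (mul_right_injective₀ (two_ne_zero' ℕ))
    refine hasSum_integral_of_dominated_convergence
      (fun k _ => (2 * ‖x‖) ^ (2 * k) / ((2 * k).factorial : ℝ)) (fun k => ?_) (fun k => ?_)
      (.of_forall fun _ => hsum) (integrable_const _) (.of_forall fun σ => Real.hasSum_cos _)
    · exact Continuous.aestronglyMeasurable (by fun_prop)
    · refine .of_forall fun σ => ?_
      have h1 : |inner ℝ x (σ : Euc n)| ≤ ‖x‖ := by
        simpa using abs_real_inner_le_norm x (σ : Euc n)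
      simp only [norm_div, norm_mul, norm_pow, norm_neg, norm_one, one_pow, one_mul,
        Real.norm_eq_abs, Nat.abs_ofNat, Nat.abs_cast]
      gcongr
  convert key using 2 with k
  have e : ∀ σ : sphere (0 : Euc n) 1,
      (-1 : ℝ) ^ k * (2 * inner ℝ x (σ : Euc n)) ^ (2 * k) / (2 * k).factorial
      = ((-1) ^ k * 4 ^ k / (2 * k).factorial) * (inner ℝ x (σ : Euc n)) ^ (2 * k) := by
    intro σ
    rw [mul_pow, pow_mul 2]; ring
  have hn2 := half_nat_pos hn
  have p1 := risingFactorial_pos hn2 k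
  have p2 := risingFactorial_pos (x := 1 / 2) (by norm_num) k
  simp_rw [e]
  rw [integral_const_mul, sphere_moment hn, ← four_pow_mul_risingFactorial, besselTerm, neg_pow,
    ← pow_mul]
  field_simp

/-- After expanding `cos (α_i - α_j)`, the quadratic form is an integral of a sum of two squares. -/
lemma besselTerm_posDef {n : ℕ} (hn : 1 ≤ n) {m : ℕ} (t : Fin m → Euc n) (c : Fin m → ℝ) :
    0 ≤ ∑ i, ∑ j, c i * c j * ∑' k, besselTerm n (t i - t j) k := by
  have : Nonempty (Fin n) := ⟨⟨0, hn⟩⟩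
  set μ := (volume : Measure (Euc n)).toSphere with hμ
  have hC : 0 < μ.real univ := by
    have : μ ≠ 0 := Measure.toSphere_ne_zero _
    have : NeZero μ := ⟨this⟩
    simp [measureReal_def, ENNReal.toReal_pos_iff, measure_lt_top, NeZero.pos]
  refine nonneg_of_mul_nonneg_right (a := μ.real univ) ?_ hC
  have h1 : ∀ x : Euc n, μ.real univ * ∑' k, besselTerm n x k
      = ∫ σ, Real.cos (2 * inner ℝ x (σ : Euc n)) ∂μ := fun x => by
    rw [← tsum_mul_left]
    exact (hasSum_sphere_cos hn x).tsum_eq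
  have hint : ∀ x : Euc n, Integrable (fun σ : Metric.sphere (0 : Euc n) 1 =>
      Real.cos (2 * inner ℝ x (σ : Euc n))) μ := fun x =>
    Integrable.of_bound (C := 1) (Continuous.aestronglyMeasurable (by fun_prop))
      (.of_forall fun σ => Real.abs_cos_le_one _)
  have h2 : μ.real univ * ∑ i, ∑ j, c i * c j * ∑' k, besselTerm n (t i - t j) k
      = ∫ σ, ∑ i, ∑ j, c i * c j * Real.cos (2 * inner ℝ (t i - t j) (σ : Euc n)) ∂μ := by
    rw [integral_finsetSum _ fun i _ => integrable_finsetSum _ fun j _ => (hint _).const_mul _,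
      Finset.mul_sum]
    refine Finset.sum_congr rfl fun i _ => ?_
    rw [integral_finsetSum _ fun j _ => (hint _).const_mul _, Finset.mul_sum]
    refine Finset.sum_congr rfl fun j _ => ?_
    rw [integral_const_mul, ← h1]; ring
  rw [h2]
  refine integral_nonneg fun σ => ?_
  have h3 : ∑ i, ∑ j, c i * c j * Real.cos (2 * inner ℝ (t i - t j) (σ : Euc n))
      = (∑ i, c i * Real.cos (2 * inner ℝ (t i) (σ : Euc n))) ^ 2
        + (∑ i, c i * Real.sin (2 * inner ℝ (t i) (σ : Euc n))) ^ 2 := by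
    simp only [sq, Finset.sum_mul_sum, ← Finset.sum_add_distrib, inner_sub_left, mul_sub,
      Real.cos_sub]
    refine Finset.sum_congr rfl fun i _ => Finset.sum_congr rfl fun j _ => ?_
    ring
  simp only [Pi.zero_apply, h3]
  positivity

/-! ### Hypergeometric functions as mixtures -/

lemma summable_besselTerm_aux {n : ℕ} (hn : 1 ≤ n) (R : ℝ) :
    Summable fun k : ℕ => |R| ^ k / (risingFactorial (n / 2) k * k.factorial) := by
  refine Summable.of_nonneg_of_le (fun k => ?_) (fun k => ?_)
    (Real.summable_pow_div_factorial (2 * |R|))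
  · exact div_nonneg (by positivity)
      (mul_nonneg (risingFactorial_pos (half_nat_pos hn) k).le (by positivity))
  -- The bound holds because every factor `n/2 + i` is at least `1/2`.
  · have h1 : (1 / 2 : ℝ) ^ k ≤ risingFactorial (n / 2) k := by
      have hn1 : (1 : ℝ) ≤ n := by exact_mod_cast hn
      have := Finset.prod_le_prod (s := Finset.range k) (f := fun _ : ℕ => (1 / 2 : ℝ))
        (g := fun i : ℕ => (n / 2 + i : ℝ)) (fun _ _ => by norm_num) (fun i _ => by
          have : (0 : ℝ) ≤ i := i.cast_nonneg
          linarith)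
      simpa [risingFactorial] using this
    have h2 : (2 * |R|) ^ k / (k.factorial : ℝ) = |R| ^ k / ((1 / 2) ^ k * k.factorial) := by
      rw [mul_pow, one_div, inv_pow]
      field_simp
    rw [h2]
    gcongr

lemma summable_abs_besselTerm {n : ℕ} (hn : 1 ≤ n) (x : Euc n) :
    Summable fun k => |besselTerm n x k| := by
  refine (summable_besselTerm_aux hn (‖x‖ ^ 2)).congr fun k => ?_
  rw [besselTerm, abs_div, abs_pow (-(‖x‖ ^ 2)), abs_neg, abs_of_pos
    (mul_pos (risingFactorial_pos (half_nat_pos hn) k) (by positivity))]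

lemma besselTerm_sqrt_smul {n : ℕ} {s : ℝ} (hs : 0 ≤ s) (x : Euc n) (k : ℕ) :
    besselTerm n (√s • x) k = besselTerm n x k * s ^ k := by
  rw [besselTerm, besselTerm, norm_smul, mul_pow, Real.norm_eq_abs, sq_abs, Real.sq_sqrt hs,
    ← mul_neg, mul_pow]
  ring

/-- Coefficientwise multiplication by a moment sequence preserves positive definiteness of
`∑ besselTerm`: at a pure power `s ^ k` it amounts to the dilation `x ↦ √s • x`. -/
lemma momentSeq_posDef {n : ℕ} (hn : 1 ≤ n) {μ : ℕ → ℝ} (hμ : IsMomentSeq μ) {m : ℕ}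
    (t : Fin m → Euc n) (c : Fin m → ℝ) :
    0 ≤ ∑ i, ∑ j, (∑' k, besselTerm n (t i - t j) k * μ k) * (c i * c j) := by
  have hs := fun i j => summable_abs_besselTerm hn (t i - t j)
  have hmul : ∀ ν : ℕ → ℝ, IsMomentSeq ν →
      ∀ i j, Summable fun k => besselTerm n (t i - t j) k * ν k := fun ν hν i j => by
    refine Summable.of_norm_bounded ((hs i j).mul_right (ν 0)) fun k => ?_
    rw [Real.norm_eq_abs, abs_mul, abs_of_nonneg (hν.nonneg k)]
    exact mul_le_mul_of_nonneg_left (hν.le_zero k) (abs_nonneg _)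
  have hswap : ∀ ν : ℕ → ℝ, IsMomentSeq ν →
      ∑ i, ∑ j, (∑' k, besselTerm n (t i - t j) k * ν k) * (c i * c j)
      = ∑' k, (∑ i, ∑ j, besselTerm n (t i - t j) k * (c i * c j)) * ν k := fun ν hν => by
    have hs1 : ∀ i j, HasSum (fun k => besselTerm n (t i - t j) k * ν k * (c i * c j))
        ((∑' k, besselTerm n (t i - t j) k * ν k) * (c i * c j)) := fun i j =>
      (hmul ν hν i j).hasSum.mul_right _
    have := hasSum_sum fun i (_ : i ∈ Finset.univ) =>
      hasSum_sum fun j (_ : j ∈ Finset.univ) => hs1 i j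
    rw [← this.tsum_eq]
    refine tsum_congr fun k => ?_
    simp only [Finset.sum_mul]
    exact Finset.sum_congr rfl fun i _ => Finset.sum_congr rfl fun j _ => by ring
  rw [hswap μ hμ]
  refine hμ.tsum_nonneg ?_ fun s hs0 hs1 => ?_
  · refine Summable.of_nonneg_of_le (fun k => abs_nonneg _) (fun k => ?_)
      (summable_sum fun i (_ : i ∈ Finset.univ) => summable_sum fun j (_ : j ∈ Finset.univ) =>
        (hs i j).mul_right |c i * c j|)
    refine (Finset.abs_sum_le_sum_abs _ _).trans (Finset.sum_le_sum fun i _ => ?_)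
    refine (Finset.abs_sum_le_sum_abs _ _).trans (Finset.sum_le_sum fun j _ => ?_)
    rw [abs_mul]
  · rw [← hswap _ (IsMomentSeq.powers hs0 hs1)]
    have := besselTerm_posDef hn (fun i => √s • t i) c
    simp only [← smul_sub, besselTerm_sqrt_smul hs0] at this
    simpa only [mul_comm] using this

/-- For a real symmetric kernel, nonnegativity of the quadratic form on real vectors yields
nonnegativity of the Hermitian form: split `ξ` into real and imaginary parts. -/
lemma hermitian_of_real {m : ℕ} {K : Fin m → Fin m → ℝ} (hsymm : ∀ i j, K i j = K j i)
    (hpos : ∀ c : Fin m → ℝ, 0 ≤ ∑ i, ∑ j, K i j * (c i * c j)) (ξ : Fin m → ℂ) :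
    ∃ c : ℝ, 0 ≤ c ∧ (∑ i, ∑ j, (K i j : ℂ) * ξ i * (starRingEnd ℂ) (ξ j)) = (c : ℂ) := by
  refine ⟨_, add_nonneg (hpos fun i => (ξ i).re) (hpos fun i => (ξ i).im), Complex.ext ?_ ?_⟩
  · simp only [Complex.re_sum, Complex.mul_re, Complex.mul_im, Complex.ofReal_re,
      Complex.ofReal_im, Complex.conj_re, Complex.conj_im, ← Finset.sum_add_distrib]
    exact Finset.sum_congr rfl fun i _ => Finset.sum_congr rfl fun j _ => by ring
  · have h1 : (∑ i, ∑ j, (K i j : ℂ) * ξ i * (starRingEnd ℂ) (ξ j)).im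
        = (∑ i, ∑ j, K i j * ((ξ i).im * (ξ j).re))
          - ∑ i, ∑ j, K i j * ((ξ i).re * (ξ j).im) := by
      simp only [Complex.im_sum, Complex.mul_re, Complex.mul_im, Complex.ofReal_re,
        Complex.ofReal_im, Complex.conj_re, Complex.conj_im, ← Finset.sum_sub_distrib]
      exact Finset.sum_congr rfl fun i _ => Finset.sum_congr rfl fun j _ => by ring
    rw [h1, Complex.ofReal_im, sub_eq_zero, Finset.sum_comm]
    exact Finset.sum_congr rfl fun i _ => Finset.sum_congr rfl fun j _ => by
      rw [hsymm]; ring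

/-- Since `(n/2)_k` occurs in both numerator and denominator, `p-1Fp(a;b;z)` is obtained from
`0F1(;n/2;z)` by multiplying its coefficients by `∏ (a'_j)_k / (b_j)_k`. -/
lemma pFq_eq {n p : ℕ} (hn : 1 ≤ n) (a : Fin p → ℝ) (b : Fin (p + 1) → ℝ) (z : ℝ) :
    pFq a b z = ∑' k : ℕ, z ^ k / (risingFactorial (n / 2) k * k.factorial) *
      ((∏ j, risingFactorial ((Fin.cons ((n : ℝ) / 2) a : Fin (p + 1) → ℝ) j) k)
        / ∏ j, risingFactorial (b j) k) := by
  refine tsum_congr fun k => ?_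
  have := (risingFactorial_pos (half_nat_pos hn) k).ne'
  rw [Fin.prod_univ_succ (fun j =>
    risingFactorial ((Fin.cons ((n : ℝ) / 2) a : Fin (p + 1) → ℝ) j) k)]
  simp only [Fin.cons_zero, Fin.cons_succ]
  field_simp

/-- If `a' = (n/2, a)` and `v_{a',b}(t) ≥ 0` on `(0,1]`, then the
Bessel-type function `r ↦ p-1Fp(a;b;-r²)` is radial positive definite in dimension `n`. -/
theorem v_nonneg_implies_rpd
    (n p : ℕ) (hn : 1 ≤ n)
    (a : Fin p → ℝ) (b : Fin (p + 1) → ℝ)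
    (ha : ∀ i, 0 < a i) (hb : ∀ j, 0 < b j)
    (hv : ∀ t : ℝ, 0 < t → t ≤ 1 →
      0 ≤ ∑ j : Fin (p + 1),
        (t ^ ((Fin.cons ((n : ℝ) / 2) a : Fin (p + 1) → ℝ) j) - t ^ b j)) :
    IsRPD n (fun r => pFq a b (-(r ^ 2))) := by
  set α : Fin (p + 1) → ℝ := Fin.cons ((n : ℝ) / 2) a with hα
  have hα0 : ∀ j, 0 < α j := Fin.cases (by simpa [hα] using half_nat_pos hn) (by simpa [hα] using ha)
  have hμ := isMomentSeq_ratio hα0 hb hv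
  have hF := pFq_eq hn a b
  rw [← hα] at hF
  set μ : ℕ → ℝ := fun k => (∏ j, risingFactorial (α j) k) / ∏ j, risingFactorial (b j) k
  refine ⟨Continuous.continuousOn (continuous_iff_continuousAt.2 fun r => ?_), fun m t ξ => ?_⟩
  -- Continuity: Weierstrass test on the neighbourhood `|y| < |r| + 1` of `r`.
  · simp only [hF]
    have hcont : ContinuousOn (fun r : ℝ => ∑' k : ℕ,
        (-(r ^ 2)) ^ k / (risingFactorial (n / 2) k * k.factorial) * μ k)
        (Metric.ball 0 (|r| + 1)) := by
      refine continuousOn_tsum (fun k => by fun_prop)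
        ((summable_besselTerm_aux hn ((|r| + 1) ^ 2)).mul_right (μ 0)) fun k y hy => ?_
      have hy : |y| ≤ |r| + 1 := by simpa using (mem_ball_zero_iff.1 hy).le
      have hpos := risingFactorial_pos (half_nat_pos hn) k
      have hy2 : y ^ 2 ≤ (|r| + 1) ^ 2 := by
        rw [← sq_abs y]; gcongr
      rw [Real.norm_eq_abs, abs_mul, abs_of_nonneg (hμ.nonneg k), abs_div, abs_pow, abs_neg,
        abs_of_pos (by positivity : (0 : ℝ) < risingFactorial (n / 2) k * k.factorial),
        abs_of_nonneg (sq_nonneg y), abs_of_nonneg (sq_nonneg (|r| + 1))]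
      have := hμ.le_zero k
      have := hμ.nonneg k
      gcongr
    exact hcont.continuousAt (Metric.isOpen_ball.mem_nhds (by simp))
  · refine hermitian_of_real (K := fun i j => pFq a b (-(‖t i - t j‖ ^ 2)))
      (fun i j => by simp only [norm_sub_rev]) (fun c => ?_) ξ
    simp only [hF]
    exact momentSeq_posDef hn hμ t c
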